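/- Suppose Q(u) ≥ 0 for every u ∈ C_c^∞(Ω) and Q admits a ground state v. Then v is a positive solution of the equation Q'(u) = 0 in Ω, i.e., ∫_Ω (|∇v|^{p−2} ∇v·∇φ + V v^{p−1} φ) dx = 0 for every φ ∈ C_c^∞(Ω). -/

import Mathlib

open MeasureTheory Filter
open scoped RealInnerProductSpace Topology

noncomputable section

/-- Euclidean space `ℝ^d`. -/
abbrev Euc (d : ℕ) := EuclideanSpace ℝ (Fin d)

/-- A test function on `Ω`: smooth with compact support contained in `Ω`. -/
def IsTestFun {d : ℕ} (Ω : Set (Euc d)) (u : Euc d → ℝ) : Prop :=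
  ContDiff ℝ (⊤ : ℕ∞) u ∧ HasCompactSupport u ∧ tsupport u ⊆ Ω

/-- The energy functional `Q(u) = ∫_Ω (|∇u|^p + V |u|^p) dx`. -/
def energyQ {d : ℕ} (Ω : Set (Euc d)) (V : Euc d → ℝ) (p : ℝ) (u : Euc d → ℝ) : ℝ :=
  ∫ x in Ω, (‖gradient u x‖ ^ p + V x * |u x| ^ p)

/-- `V` is measurable and bounded on every compact subset of `Ω`. -/
def LocBddPotential {d : ℕ} (Ω : Set (Euc d)) (V : Euc d → ℝ) : Prop :=
  Measurable V ∧ ∀ K : Set (Euc d), K ⊆ Ω → IsCompact K → ∃ C : ℝ, ∀ x ∈ K, |V x| ≤ C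

/-- A positive supersolution of `Q'(u) = 0` in `Ω`. -/
def IsPositiveSupersolution {d : ℕ} (Ω : Set (Euc d)) (V : Euc d → ℝ) (p : ℝ)
    (v : Euc d → ℝ) : Prop :=
  ContDiffOn ℝ 1 v Ω ∧ (∀ x ∈ Ω, 0 < v x) ∧
    ∀ φ : Euc d → ℝ, IsTestFun Ω φ → (∀ x, 0 ≤ φ x) →
      0 ≤ ∫ x in Ω, (‖gradient v x‖ ^ (p - 2) * ⟪gradient v x, gradient φ x⟫
            + V x * v x ^ (p - 1) * φ x)

/-- A positive (weak) solution of `Q'(u) = 0` in `Ω`. -/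
def IsPositiveSolution {d : ℕ} (Ω : Set (Euc d)) (V : Euc d → ℝ) (p : ℝ)
    (v : Euc d → ℝ) : Prop :=
  ContDiffOn ℝ 1 v Ω ∧ (∀ x ∈ Ω, 0 < v x) ∧
    ∀ φ : Euc d → ℝ, IsTestFun Ω φ →
      (∫ x in Ω, (‖gradient v x‖ ^ (p - 2) * ⟪gradient v x, gradient φ x⟫
            + V x * v x ^ (p - 1) * φ x)) = 0

/-- A null sequence for the functional `Q`. -/
def IsNullSequence {d : ℕ} (Ω : Set (Euc d)) (V : Euc d → ℝ) (p : ℝ)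
    (u : ℕ → Euc d → ℝ) : Prop :=
  (∀ k, IsTestFun Ω (u k)) ∧ (∀ k x, 0 ≤ u k x) ∧
    ∃ B : Set (Euc d), IsOpen B ∧ IsCompact (closure B) ∧ closure B ⊆ Ω ∧
      (∀ k, (∫ x in B, u k x ^ p) = 1) ∧
      Tendsto (fun k => energyQ Ω V p (u k)) atTop (𝓝 0)

/-- A ground state of `Q`: a positive `C¹` function on `Ω` which is the limit in
`L^p_loc(Ω)` of a null sequence. -/
def IsGroundState {d : ℕ} (Ω : Set (Euc d)) (V : Euc d → ℝ) (p : ℝ)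
    (v : Euc d → ℝ) : Prop :=
  ContDiffOn ℝ 1 v Ω ∧ (∀ x ∈ Ω, 0 < v x) ∧
    ∃ u : ℕ → Euc d → ℝ, IsNullSequence Ω V p u ∧
      ∀ K : Set (Euc d), K ⊆ Ω → IsCompact K →
        Tendsto (fun k => ∫ x in K, |u k x - v x| ^ p) atTop (𝓝 0)

/-- `Q` has a weighted spectral gap (is strictly positive) in `Ω`. -/
def HasSpectralGap {d : ℕ} (Ω : Set (Euc d)) (V : Euc d → ℝ) (p : ℝ) : Prop :=
  ∃ W : Euc d → ℝ, ContinuousOn W Ω ∧ (∀ x ∈ Ω, 0 < W x) ∧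
    ∀ u : Euc d → ℝ, IsTestFun Ω u → (∫ x in Ω, W x * |u x| ^ p) ≤ energyQ Ω V p u

/-- `c_B`: the infimum of `Q(u)` over test functions with `∫_B |u|^p = 1`. -/
def cB {d : ℕ} (Ω B : Set (Euc d)) (V : Euc d → ℝ) (p : ℝ) : ℝ :=
  sInf { q : ℝ | ∃ u : Euc d → ℝ, IsTestFun Ω u ∧ (∫ x in B, |u x| ^ p) = 1 ∧
    q = energyQ Ω V p u }

/-- The Picone Lagrangian `L(u,v)`. -/
def piconeL {d : ℕ} (p : ℝ) (u v : Euc d → ℝ) (x : Euc d) : ℝ :=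
  ‖gradient u x‖ ^ p + (p - 1) * (u x / v x) ^ p * ‖gradient v x‖ ^ p
    - p * (u x / v x) ^ (p - 1) *
        (‖gradient v x‖ ^ (p - 2) * ⟪gradient u x, gradient v x⟫)


lemma abs_rpow_eps {p : ℝ} (hp : 0 < p) {ε : ℝ} (hε : 0 < ε) :
    ∃ C : ℝ, 0 ≤ C ∧ ∀ a b : ℝ, abs (|a| ^ p - |b| ^ p) ≤ ε * |b| ^ p + C * |a - b| ^ p := by
  have hc : ContinuousAt (fun x : ℝ => |x| ^ p) 1 :=
    (continuous_abs.rpow_const (fun _ => Or.inr hp.le)).continuousAt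
  obtain ⟨δ, hδ, h⟩ := Metric.continuousAt_iff.1 hc ε hε
  refine ⟨(1 + 1 / δ) ^ p + (1 / δ) ^ p, by positivity, fun a b => ?_⟩
  by_cases hab : |a - b| < δ * |b|
  · have hb : b ≠ 0 := by
      rintro rfl
      simp at hab
      exact absurd hab (not_lt.2 (abs_nonneg a))
    have hb' : 0 < |b| := abs_pos.2 hb
    have h1 : dist (a / b) 1 < δ := by
      rw [Real.dist_eq, div_sub_one hb, abs_div, div_lt_iff₀ hb']
      exact hab
    have h2 := h h1
    rw [Real.dist_eq] at h2
    simp only [abs_one, Real.one_rpow] at h2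
    have h3 : |a| ^ p = |a / b| ^ p * |b| ^ p := by
      rw [← Real.mul_rpow (abs_nonneg _) (abs_nonneg _), ← abs_mul, div_mul_cancel₀ _ hb]
    have h4 : 0 ≤ |b| ^ p := by positivity
    rw [h3, ← sub_one_mul, abs_mul, abs_of_nonneg h4]
    have : 0 ≤ ((1 + 1 / δ) ^ p + (1 / δ) ^ p) * |a - b| ^ p := by positivity
    nlinarith
  · push Not at hab
    have hb : |b| ≤ 1 / δ * |a - b| := by
      rw [one_div, ← div_eq_inv_mul, le_div_iff₀ hδ]; linarith
    have ha : |a| ≤ (1 + 1 / δ) * |a - b| := by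
      have : |a| ≤ |a - b| + |b| := by simpa using abs_add_le (a - b) b
      linarith
    have hb2 : |b| ^ p ≤ (1 / δ) ^ p * |a - b| ^ p := by
      rw [← Real.mul_rpow (by positivity) (abs_nonneg _)]
      exact Real.rpow_le_rpow (abs_nonneg _) hb hp.le
    have ha2 : |a| ^ p ≤ (1 + 1 / δ) ^ p * |a - b| ^ p := by
      rw [← Real.mul_rpow (by positivity) (abs_nonneg _)]
      exact Real.rpow_le_rpow (abs_nonneg _) ha hp.le
    have h4 : 0 ≤ |b| ^ p := by positivity
    have h5 : 0 ≤ |a| ^ p := by positivity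
    have h6 : 0 ≤ ε * |b| ^ p := by positivity
    rw [abs_le]; constructor <;> nlinarith

lemma integrableOn_weight {d : ℕ} {S : Set (Euc d)} (hS : IsCompact S) {W : Euc d → ℝ}
    (hW : Measurable W) {M : ℝ} (hM : ∀ x ∈ S, |W x| ≤ M) {g : Euc d → ℝ} (hg : Continuous g) :
    IntegrableOn (fun x => W x * g x) S := by
  have h1 : IntegrableOn g S := hg.continuousOn.integrableOn_compact hS
  refine Integrable.bdd_mul h1 hW.aestronglyMeasurable (c := M) ?_
  exact (ae_restrict_mem hS.measurableSet).mono fun x hx => hM x hx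

lemma tendsto_weighted {d : ℕ} {S : Set (Euc d)} (hS : IsCompact S) {W : Euc d → ℝ}
    (hW : Measurable W) {M : ℝ} (hM : ∀ x ∈ S, |W x| ≤ M) {p : ℝ} (hp : 0 < p)
    {g : ℕ → Euc d → ℝ} {f : Euc d → ℝ} (hg : ∀ k, Continuous (g k)) (hf : Continuous f)
    (h : Tendsto (fun k => ∫ x in S, |g k x - f x| ^ p) atTop (𝓝 0)) :
    Tendsto (fun k => ∫ x in S, W x * |g k x| ^ p) atTop (𝓝 (∫ x in S, W x * |f x| ^ p)) := by
  have cp : ∀ {h : Euc d → ℝ}, Continuous h → Continuous (fun x => |h x| ^ p) := fun hh =>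
    hh.abs.rpow_const (fun _ => Or.inr hp.le)
  wlog hM0 : 0 ≤ M generalizing M
  · exact this (M := |M|) (fun x hx => (hM x hx).trans (le_abs_self M)) (abs_nonneg M)
  rw [Metric.tendsto_atTop]
  intro e he
  set I := ∫ x in S, |f x| ^ p with hI
  have hI0 : 0 ≤ I := integral_nonneg fun x => by positivity
  obtain ⟨C, hC0, hC⟩ := abs_rpow_eps hp (ε := e / (2 * (M * I + 1))) (by positivity)
  set ε := e / (2 * (M * I + 1)) with hε
  have hεI : M * (ε * I) < e / 2 + e / 4 * 0 := by
    have : M * (ε * I) = e / 2 * (M * I / (M * I + 1)) := by rw [hε]; field_simp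
    rw [this, mul_zero, add_zero]
    have : M * I / (M * I + 1) < 1 := by
      rw [div_lt_one (by positivity)]; linarith
    nlinarith
  have h2 : Tendsto (fun k => M * (C * ∫ x in S, |g k x - f x| ^ p)) atTop (𝓝 (M * (C * 0))) :=
    (h.const_mul C).const_mul M
  rw [mul_zero, mul_zero] at h2
  obtain ⟨N, hN⟩ := (Metric.tendsto_atTop.1 h2) (e / 2) (by positivity)
  refine ⟨N, fun k hk => ?_⟩
  have h3 := hN k hk
  rw [Real.dist_eq, sub_zero] at h3
  have h3 := (le_abs_self _).trans_lt h3
  rw [Real.dist_eq, ← integral_sub (integrableOn_weight hS hW hM (cp (hg k)))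
    (integrableOn_weight hS hW hM (cp hf))]
  have hi1 : IntegrableOn (fun x => M * (ε * |f x| ^ p)) S :=
    (continuous_const.mul (continuous_const.mul (cp hf))).continuousOn.integrableOn_compact hS
  have hi2 : IntegrableOn (fun x => M * (C * |g k x - f x| ^ p)) S :=
    (continuous_const.mul (continuous_const.mul (cp ((hg k).sub hf)))).continuousOn.integrableOn_compact hS
  calc abs (∫ x in S, (W x * |g k x| ^ p - W x * |f x| ^ p))
      ≤ ∫ x in S, (M * (ε * |f x| ^ p) + M * (C * |g k x - f x| ^ p)) := by
        rw [← Real.norm_eq_abs]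
        refine norm_integral_le_of_norm_le (hi1.add hi2) ?_
        refine (ae_restrict_mem hS.measurableSet).mono fun x hx => ?_
        rw [Real.norm_eq_abs, ← mul_sub, abs_mul, ← mul_add]
        exact mul_le_mul (hM x hx) (hC _ _) (abs_nonneg _) hM0
    _ = M * (ε * I) + M * (C * ∫ x in S, |g k x - f x| ^ p) := by
        rw [integral_add hi1 hi2, integral_const_mul, integral_const_mul, integral_const_mul,
          integral_const_mul]
    _ < e := by linarith

lemma conv_ineq {E : Type*} [NormedAddCommGroup E] [NormedSpace ℝ E] {p : ℝ} (hp : 1 < p)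
    {η : ℝ} (h0 : 0 ≤ η) (h1 : η ≤ 1) (a b r : E) {c : ℝ} (hc : 0 ≤ c)
    (hr : ‖r‖ ≤ c * η ^ ((p - 1) / p)) :
    ‖(1 - η) • a + η • b + r‖ ^ p ≤ (1 - η) * ‖a‖ ^ p + (η ^ (1 / p) * ‖b‖ + c) ^ p := by
  have hp0 : 0 < p := by linarith
  rcases h0.eq_or_lt with rfl | hpos
  · rw [Real.zero_rpow (by apply ne_of_gt; apply div_pos <;> linarith), mul_zero] at hr
    have : r = 0 := norm_le_zero_iff.1 hr
    subst this
    simp only [sub_zero, one_smul, zero_smul, add_zero, one_mul, le_add_iff_nonneg_right]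
    positivity
  · have e1 : η ^ (1 / p) * ((c * η ^ ((p - 1) / p)) / η) = c := by
      have : η ^ (1 / p) * η ^ ((p - 1) / p) = η := by
        rw [← Real.rpow_add hpos]
        have : 1 / p + (p - 1) / p = 1 := by field_simp; ring
        rw [this, Real.rpow_one]
      field_simp
      linear_combination c * this
    have hn : ‖(1 - η) • a + η • b + r‖ ≤ (1 - η) * ‖a‖ + η * (‖b‖ + (c * η ^ ((p - 1) / p)) / η) := by
      have : η * (‖b‖ + (c * η ^ ((p - 1) / p)) / η) = η * ‖b‖ + c * η ^ ((p - 1) / p) := by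
        field_simp
      rw [this]
      have h2 := norm_add₃_le (a := (1 - η) • a) (b := η • b) (c := r)
      rw [norm_smul, norm_smul, Real.norm_of_nonneg h0, Real.norm_of_nonneg (by linarith)] at h2
      linarith
    have hB0 : 0 ≤ ‖b‖ + (c * η ^ ((p - 1) / p)) / η := by positivity
    have hcv := (convexOn_rpow hp.le).2 (Set.mem_Ici.2 (norm_nonneg a))
      (Set.mem_Ici.2 hB0) (sub_nonneg.2 h1) h0 (by ring)
    simp only [smul_eq_mul] at hcv
    refine (Real.rpow_le_rpow (norm_nonneg _) hn hp0.le).trans (hcv.trans ?_)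
    gcongr
    apply le_of_eq
    have : η ^ (1 / p) * ‖b‖ + c = η ^ (1 / p) * (‖b‖ + (c * η ^ ((p - 1) / p)) / η) := by
      rw [mul_add, e1]
    rw [this, Real.mul_rpow (by positivity) (by positivity), ← Real.rpow_mul h0]
    rw [one_div, inv_mul_cancel₀ hp0.ne', Real.rpow_one]

/-- Young's inequality in dual form. -/
lemma young_dual {E : Type*} [NormedAddCommGroup E] [InnerProductSpace ℝ E] {p : ℝ} (hp : 1 < p)
    (F a : E) : p * ⟪F, a⟫ - (p - 1) * ‖F‖ ^ (p / (p - 1)) ≤ ‖a‖ ^ p := by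
  have hp1 : 0 < p - 1 := by linarith
  have hpq : p.HolderConjugate (p / (p - 1)) := Real.HolderConjugate.conjExponent hp
  have h := Real.young_inequality_of_nonneg (norm_nonneg a) (norm_nonneg F) hpq
  have h2 := real_inner_le_norm F a
  have h3 : p * (‖a‖ ^ p / p + ‖F‖ ^ (p / (p - 1)) / (p / (p - 1)))
      = ‖a‖ ^ p + (p - 1) * ‖F‖ ^ (p / (p - 1)) := by
    field_simp
  nlinarith

/-- The duality map `|a|^{p-2} a`. -/
def dualMap {E : Type*} [NormedAddCommGroup E] [InnerProductSpace ℝ E] (p : ℝ) (a : E) : E :=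
  ‖a‖ ^ (p - 2) • a

lemma norm_dualMap {E : Type*} [NormedAddCommGroup E] [InnerProductSpace ℝ E] {p : ℝ} (hp : 1 < p)
    (a : E) : ‖dualMap p a‖ = ‖a‖ ^ (p - 1) := by
  rw [dualMap, norm_smul, Real.norm_of_nonneg (by positivity)]
  rcases eq_or_ne a 0 with rfl | ha
  · rw [norm_zero, mul_zero, Real.zero_rpow (by linarith)]
  · rw [← Real.rpow_add_one (norm_ne_zero_iff.2 ha)]; ring_nf

lemma young_eq {E : Type*} [NormedAddCommGroup E] [InnerProductSpace ℝ E] {p : ℝ} (hp : 1 < p)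
    (a : E) : p * ⟪dualMap p a, a⟫ - (p - 1) * ‖dualMap p a‖ ^ (p / (p - 1)) = ‖a‖ ^ p := by
  have hp1 : p - 1 ≠ 0 := by linarith
  rw [norm_dualMap hp, ← Real.rpow_mul (norm_nonneg a), mul_div_cancel₀ _ hp1, dualMap,
    real_inner_smul_left, real_inner_self_eq_norm_sq]
  have : ‖a‖ ^ (p - 2) * ‖a‖ ^ 2 = ‖a‖ ^ p := by
    rcases eq_or_ne a 0 with rfl | ha
    · rw [norm_zero, Real.zero_rpow (by linarith : p ≠ 0)]; simp
    · rw [← Real.rpow_natCast, ← Real.rpow_add (norm_pos_iff.2 ha)]; norm_num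
  rw [this]; ring

lemma continuous_dualMap {E : Type*} [NormedAddCommGroup E] [InnerProductSpace ℝ E] {p : ℝ}
    (hp : 1 < p) : Continuous (dualMap p : E → E) := by
  rw [continuous_iff_continuousAt]
  intro a
  rcases eq_or_ne a 0 with rfl | ha
  · have h0 : dualMap p (0 : E) = 0 := by simp [dualMap]
    rw [ContinuousAt, h0, tendsto_zero_iff_norm_tendsto_zero]
    simp_rw [norm_dualMap hp]
    have : Continuous (fun x : E => ‖x‖ ^ (p - 1)) :=
      continuous_norm.rpow_const (fun _ => Or.inr (by linarith))
    have h := this.tendsto 0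
    rwa [norm_zero, Real.zero_rpow (by linarith)] at h
  · exact ((continuous_norm.continuousAt).rpow_const (Or.inl (norm_ne_zero_iff.2 ha))).smul
      continuousAt_id

lemma gradient_def' {d : ℕ} (f : Euc d → ℝ) (x : Euc d) :
    gradient f x = (InnerProductSpace.toDual ℝ (Euc d)).symm (fderiv ℝ f x) := rfl

lemma continuous_gradient {d : ℕ} {f : Euc d → ℝ} (hf : ContDiff ℝ 1 f) :
    Continuous (gradient f) := by
  have : Continuous (fderiv ℝ f) := hf.continuous_fderiv one_ne_zero
  exact (InnerProductSpace.toDual ℝ (Euc d)).symm.continuous.comp this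

lemma gradient_eq_zero_of_notMem {d : ℕ} {f : Euc d → ℝ} {x : Euc d} (hx : x ∉ tsupport f) :
    gradient f x = 0 := by
  rw [notMem_tsupport_iff_eventuallyEq] at hx
  rw [hx.gradient_eq]
  exact gradient_fun_const x 0

lemma gradient_interp {d : ℕ} {η u h : Euc d → ℝ} (x : Euc d) (hη : DifferentiableAt ℝ η x)
    (hu : DifferentiableAt ℝ u x) (hh : DifferentiableAt ℝ h x) :
    gradient (fun y => (1 - η y) * u y + η y * h y) x
      = (1 - η x) • gradient u x + η x • gradient h x + (h x - u x) • gradient η x := by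
  have h1 : HasFDerivAt (fun y => (1 - η y) * u y + η y * h y) _ x :=
    ((hη.hasFDerivAt.const_sub 1).mul hu.hasFDerivAt).add (hη.hasFDerivAt.mul hh.hasFDerivAt)
  simp only [gradient_def']
  rw [h1.fderiv]
  simp only [map_add, map_smul, map_neg]
  generalize (InnerProductSpace.toDual ℝ (Euc d)).symm (fderiv ℝ u x) = A
  generalize (InnerProductSpace.toDual ℝ (Euc d)).symm (fderiv ℝ h x) = B
  generalize (InnerProductSpace.toDual ℝ (Euc d)).symm (fderiv ℝ η x) = C
  module

lemma gradient_add_smul {d : ℕ} {f φ : Euc d → ℝ} (t : ℝ) (x : Euc d)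
    (hf : DifferentiableAt ℝ f x) (hφ : DifferentiableAt ℝ φ x) :
    gradient (fun y => f y + t * φ y) x = gradient f x + t • gradient φ x := by
  have h1 : HasFDerivAt (fun y => f y + t * φ y) _ x :=
    hf.hasFDerivAt.add (hφ.hasFDerivAt.const_mul t)
  simp only [gradient_def']
  rw [h1.fderiv]
  simp only [map_add, map_smul]

lemma exists_cutoff {d : ℕ} {K Ω : Set (Euc d)} (hK : IsCompact K) (hΩ : IsOpen Ω) (hKΩ : K ⊆ Ω) :
    ∃ ζ : Euc d → ℝ, IsTestFun Ω ζ ∧ (∀ x, 0 ≤ ζ x) ∧ (∀ x, ζ x ≤ 1) ∧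
      ∀ᶠ x in 𝓝ˢ K, ζ x = 1 := by
  obtain ⟨L, hL, hKL, hLΩ⟩ := exists_compact_between hK hΩ hKΩ
  obtain ⟨f, h1, h2, h3⟩ := exists_contMDiffMap_one_nhds_of_subset_interior
    (n := (⊤ : ℕ∞)) (modelWithCornersSelf ℝ (Euc d)) hK.isClosed hKL
  have hs : tsupport f ⊆ L := closure_minimal (fun x hx => by
    by_contra hxL; exact hx (h2 x hxL)) hL.isClosed
  exact ⟨f, ⟨f.contMDiff.contDiff, hL.of_isClosed_subset (isClosed_tsupport _) hs, hs.trans hLΩ⟩,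
    fun x => (h3 x).1, fun x => (h3 x).2, h1⟩

open scoped Convolution in
lemma exists_mollify {d : ℕ} {Ω : Set (Euc d)} (hΩ : IsOpen Ω) {f : Euc d → ℝ}
    (hf : ContDiff ℝ 1 f) (hfc : HasCompactSupport f) (hfs : tsupport f ⊆ Ω) :
    ∃ K : Set (Euc d), IsCompact K ∧ K ⊆ Ω ∧ tsupport f ⊆ K ∧ ∃ g : ℕ → Euc d → ℝ,
      (∀ j, IsTestFun Ω (g j)) ∧ (∀ j, tsupport (g j) ⊆ K) ∧
      (∀ x, Tendsto (fun j => g j x) atTop (𝓝 (f x))) ∧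
      (∀ x, Tendsto (fun j => gradient (g j) x) atTop (𝓝 (gradient f x))) ∧
      ∃ C : ℝ, ∀ j x, |g j x| ≤ C ∧ ‖gradient (g j) x‖ ≤ C := by
  obtain ⟨δ, hδ, hδΩ⟩ := hfc.isCompact.exists_cthickening_subset_open hΩ hfs
  set K := Metric.cthickening δ (tsupport f) with hKdef
  have hK : IsCompact K := hfc.isCompact.cthickening
  let φ : ℕ → ContDiffBump (0 : Euc d) := fun j =>
    ⟨δ / (j + 1) / 2, δ / (j + 1), by positivity, half_lt_self (by positivity)⟩
  have hφr : Tendsto (fun j => (φ j).rOut) atTop (𝓝 0) := by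
    have := (tendsto_one_div_add_atTop_nhds_zero_nat (𝕜 := ℝ)).const_mul δ
    simp only [mul_one_div, mul_zero] at this
    exact this
  have hφδ : ∀ j, (φ j).rOut ≤ δ := fun j => by
    change δ / ((j : ℝ) + 1) ≤ δ
    apply div_le_self hδ.le
    have : (0 : ℝ) ≤ j := by positivity
    linarith
  have hfd : Continuous (fderiv ℝ f) := hf.continuous_fderiv one_ne_zero
  have hfdc : HasCompactSupport (fderiv ℝ f) := hfc.fderiv ℝ
  let g : ℕ → Euc d → ℝ := fun j =>
    ((φ j).normed volume ⋆[ContinuousLinearMap.lsmul ℝ ℝ, volume] f)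
  have hLeq : (ContinuousLinearMap.lsmul ℝ ℝ : ℝ →L[ℝ] ℝ →L[ℝ] ℝ).precompR (Euc d)
      = (ContinuousLinearMap.lsmul ℝ ℝ : ℝ →L[ℝ] (Euc d →L[ℝ] ℝ) →L[ℝ] (Euc d →L[ℝ] ℝ)) := by
    ext a
    simp
  have hgd : ∀ j x, fderiv ℝ (g j) x = ((φ j).normed volume
      ⋆[(ContinuousLinearMap.lsmul ℝ ℝ : ℝ →L[ℝ] (Euc d →L[ℝ] ℝ) →L[ℝ] (Euc d →L[ℝ] ℝ)), volume]
        (fderiv ℝ f)) x := fun j x => by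
    have := (hfc.hasFDerivAt_convolution_right (μ := volume)
      (ContinuousLinearMap.lsmul ℝ ℝ : ℝ →L[ℝ] ℝ →L[ℝ] ℝ)
      ((φ j).continuous_normed (μ := volume)).locallyIntegrable hf x)
    rw [hLeq] at this
    exact this.fderiv
  have hsupp : ∀ j, tsupport (g j) ⊆ K := fun j => by
    refine closure_minimal ?_ hK.isClosed
    refine (support_convolution_subset_swap _).trans ?_
    rw [(φ j).support_normed_eq]
    rintro _ ⟨a, ha, b, hb, rfl⟩
    refine Metric.mem_cthickening_of_dist_le _ a _ _ (subset_tsupport _ ha) ?_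
    rw [mem_ball_zero_iff] at hb
    simp only [dist_self_add_left]
    exact hb.le.trans (hφδ j)
  obtain ⟨C1, hC1⟩ := hfc.exists_bound_of_continuous hf.continuous
  obtain ⟨C2, hC2⟩ := hfdc.exists_bound_of_continuous hfd
  refine ⟨K, hK, hδΩ, Metric.self_subset_cthickening _, g, fun j => ⟨?_, ?_, ?_⟩, hsupp,
    fun x => ?_, fun x => ?_, 3 * C1 + 3 * C2, fun j x => ?_⟩
  · exact (φ j).hasCompactSupport_normed.contDiff_convolution_left _ (φ j).contDiff_normed
      hf.continuous.locallyIntegrable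
  · exact hK.of_isClosed_subset (isClosed_tsupport _) (hsupp j)
  · exact (hsupp j).trans hδΩ
  · exact ContDiffBump.convolution_tendsto_right_of_continuous hφr hf.continuous x
  · simp only [gradient_def', hgd]
    exact ((InnerProductSpace.toDual ℝ (Euc d)).symm.continuous.tendsto _).comp
      (ContDiffBump.convolution_tendsto_right_of_continuous hφr hfd x)
  · have hC1' := (norm_nonneg _).trans (hC1 x)
    have hC2' := (norm_nonneg _).trans (hC2 x)
    constructor
    · have h := (φ j).dist_normed_convolution_le (μ := volume) (x₀ := x) (ε := 2 * C1)
        hf.continuous.aestronglyMeasurable (fun y _ => by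
          have := dist_le_norm_add_norm (f y) (f x)
          linarith [hC1 x, hC1 y])
      have h2 : ‖g j x‖ ≤ dist (g j x) (f x) + ‖f x‖ := by
        rw [dist_eq_norm]; simpa using norm_add_le (g j x - f x) (f x)
      rw [← Real.norm_eq_abs]
      have h3 : dist (g j x) (f x) ≤ 2 * C1 := h
      linarith [hC1 x]
    · have h := (φ j).dist_normed_convolution_le (μ := volume) (x₀ := x) (ε := 2 * C2)
        hfd.aestronglyMeasurable (fun y _ => by
          have := dist_le_norm_add_norm (fderiv ℝ f y) (fderiv ℝ f x)
          linarith [hC2 x, hC2 y])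
      rw [← hgd] at h
      have h2 : ‖fderiv ℝ (g j) x‖ ≤ dist (fderiv ℝ (g j) x) (fderiv ℝ f x) + ‖fderiv ℝ f x‖ := by
        rw [dist_eq_norm]; simpa using norm_add_le (fderiv ℝ (g j) x - fderiv ℝ f x) (fderiv ℝ f x)
      rw [gradient_def', LinearIsometryEquiv.norm_map]
      linarith [hC2 x]

/-- Restriction of the energy to a compact set containing the support. -/
lemma energyQ_eq {d : ℕ} {Ω K : Set (Euc d)} (hΩ : IsOpen Ω) {V : Euc d → ℝ} {p : ℝ}
    (hp : 0 < p) (hKΩ : K ⊆ Ω) {u : Euc d → ℝ} (hu : tsupport u ⊆ K) :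
    energyQ Ω V p u = ∫ x in K, (‖gradient u x‖ ^ p + V x * |u x| ^ p) := by
  refine setIntegral_eq_of_subset_of_forall_sdiff_eq_zero hΩ.measurableSet hKΩ fun x hx => ?_
  have hx' : x ∉ tsupport u := fun h => hx.2 (hu h)
  rw [gradient_eq_zero_of_notMem hx', image_eq_zero_of_notMem_tsupport hx']
  simp [Real.zero_rpow hp.ne']

lemma energyQ_nonneg_C1 {d : ℕ} {Ω : Set (Euc d)} (hΩ : IsOpen Ω) {V : Euc d → ℝ} {p : ℝ}
    (hp : 0 < p) (hV : LocBddPotential Ω V)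
    (hQ : ∀ u : Euc d → ℝ, IsTestFun Ω u → 0 ≤ energyQ Ω V p u) {f : Euc d → ℝ}
    (hf : ContDiff ℝ 1 f) (hfc : HasCompactSupport f) (hfs : tsupport f ⊆ Ω) :
    0 ≤ energyQ Ω V p f := by
  obtain ⟨K, hK, hKΩ, hfK, g, hgt, hgK, hg1, hg2, C, hC⟩ := exists_mollify hΩ hf hfc hfs
  obtain ⟨M, hM⟩ := hV.2 K hKΩ hK
  have hlim : Tendsto (fun j => energyQ Ω V p (g j)) atTop (𝓝 (energyQ Ω V p f)) := by
    rw [energyQ_eq hΩ hp hKΩ hfK]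
    simp_rw [fun j => energyQ_eq (V := V) hΩ hp hKΩ (hgK j)]
    refine tendsto_integral_of_dominated_convergence (fun _ => C ^ p + M * C ^ p) (fun j => ?_) ?_
      (fun j => ?_) ?_
    · have hc1 : Continuous (gradient (g j)) := continuous_gradient ((hgt j).1.of_le (by simp))
      have hc2 : Continuous (g j) := (hgt j).1.continuous
      exact ((hc1.norm.rpow_const (fun _ => Or.inr hp.le)).measurable.add (hV.1.mul
        (hc2.abs.rpow_const (fun _ => Or.inr hp.le)).measurable)).aestronglyMeasurable
    · exact continuous_const.continuousOn.integrableOn_compact hK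
    · refine (ae_restrict_mem hK.measurableSet).mono fun x hx => ?_
      have h1 : ‖gradient (g j) x‖ ^ p ≤ C ^ p :=
        Real.rpow_le_rpow (norm_nonneg _) (hC j x).2 hp.le
      have h2 : |g j x| ^ p ≤ C ^ p := Real.rpow_le_rpow (abs_nonneg _) (hC j x).1 hp.le
      refine (norm_add_le _ _).trans (add_le_add ?_ ?_)
      · rwa [Real.norm_of_nonneg (by positivity)]
      · rw [norm_mul, Real.norm_eq_abs, Real.norm_of_nonneg (by positivity : 0 ≤ |g j x| ^ p)]
        exact mul_le_mul (hM x hx) h2 (by positivity) ((abs_nonneg _).trans (hM x hx))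
    · refine Eventually.of_forall fun x => ?_
      exact ((hg2 x).norm.rpow_const (Or.inr hp.le)).add
        (((hg1 x).abs.rpow_const (Or.inr hp.le)).const_mul _)
  exact ge_of_tendsto' hlim fun j => hQ _ (hgt j)

/-- Integration by parts against a `C¹` compactly supported vector field. -/
lemma exists_div {d : ℕ} {G : Euc d → Euc d} (hG : ContDiff ℝ 1 G) (hGc : HasCompactSupport G) :
    ∃ D : Euc d → ℝ, Continuous D ∧ (∀ x ∉ tsupport G, D x = 0) ∧
      ∀ w : Euc d → ℝ, ContDiff ℝ 1 w → ∫ x, ⟪G x, gradient w x⟫ = ∫ x, D x * w x := by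
  let e : Fin d → Euc d := fun i => EuclideanSpace.single i (1 : ℝ)
  let Gi : Fin d → Euc d → ℝ := fun i x => (G x) i
  have hGi : ∀ i, ContDiff ℝ 1 (Gi i) := fun i =>
    (EuclideanSpace.proj i : Euc d →L[ℝ] ℝ).contDiff.comp hG
  have hGis : ∀ i, tsupport (Gi i) ⊆ tsupport G := fun i => by
    refine closure_mono fun x hx => ?_
    intro h0
    apply hx
    simp [Gi, h0]
  have hGic : ∀ i, HasCompactSupport (Gi i) := fun i =>
    hGc.isCompact.of_isClosed_subset (isClosed_tsupport _) (hGis i)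
  have hd : ∀ i, Continuous (fun x => fderiv ℝ (Gi i) x (e i)) := fun i =>
    ((hGi i).continuous_fderiv one_ne_zero).clm_apply continuous_const
  have hdc : ∀ i, HasCompactSupport (fun x => fderiv ℝ (Gi i) x (e i)) := fun i =>
    (hGic i).fderiv_apply ℝ (e i)
  refine ⟨fun x => - ∑ i, fderiv ℝ (Gi i) x (e i), ?_, ?_, ?_⟩
  · exact (continuous_finsetSum _ fun i _ => hd i).neg
  · intro x hx
    have : ∀ i, fderiv ℝ (Gi i) x = 0 := fun i => by
      by_contra hne
      exact hx (hGis i (support_fderiv_subset ℝ hne))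
    simp [this]
  · intro w hw
    have hwd : ∀ i, Continuous (fun x => fderiv ℝ w x (e i)) := fun i =>
      (hw.continuous_fderiv one_ne_zero).clm_apply continuous_const
    have h1 : ∀ x, ⟪G x, gradient w x⟫ = ∑ i, Gi i x * fderiv ℝ w x (e i) := fun x => by
      rw [real_inner_comm, inner_gradient_left]
      conv_lhs => rw [← (EuclideanSpace.basisFun (Fin d) ℝ).sum_repr (G x)]
      simp [Gi, e]
    have hI1 : ∀ i, Integrable (fun x => Gi i x * fderiv ℝ w x (e i)) := fun i =>
      ((hGi i).continuous.mul (hwd i)).integrable_of_hasCompactSupport (hGic i).mul_right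
    have hI2 : ∀ i, Integrable (fun x => fderiv ℝ (Gi i) x (e i) * w x) := fun i =>
      ((hd i).mul hw.continuous).integrable_of_hasCompactSupport (hdc i).mul_right
    have hI3 : ∀ i, Integrable (fun x => Gi i x * w x) := fun i =>
      ((hGi i).continuous.mul hw.continuous).integrable_of_hasCompactSupport (hGic i).mul_right
    simp_rw [h1, neg_mul, Finset.sum_mul]
    rw [integral_neg, integral_finsetSum _ fun i _ => hI1 i, integral_finsetSum _ fun i _ => hI2 i,
      ← Finset.sum_neg_distrib]
    refine Finset.sum_congr rfl fun i _ => ?_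
    exact integral_mul_fderiv_eq_neg_fderiv_mul_of_integrable (hI2 i) (hI1 i) (hI3 i)
      (fun x _ => ((hGi i).differentiable one_ne_zero) x)
      (fun x _ => (hw.differentiable one_ne_zero) x)

lemma tendsto_integral_mul {d : ℕ} {S : Set (Euc d)} (hS : IsCompact S) {p : ℝ} (hp : 1 < p)
    {D : Euc d → ℝ} (hD : Continuous D) {w : ℕ → Euc d → ℝ} (hw : ∀ k, Continuous (w k))
    (h : Tendsto (fun k => ∫ x in S, |w k x| ^ p) atTop (𝓝 0)) :
    Tendsto (fun k => ∫ x in S, D x * w k x) atTop (𝓝 0) := by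
  have hpq : p.HolderConjugate (p / (p - 1)) := Real.HolderConjugate.conjExponent hp
  have : IsFiniteMeasure ((volume : Measure (Euc d)).restrict S) :=
    ⟨by simpa using hS.measure_lt_top⟩
  have hmem : ∀ {g : Euc d → ℝ} (q : ENNReal), Continuous g →
      MemLp (fun x => |g x|) q (volume.restrict S) := fun {g} q hg => by
    obtain ⟨C, hC⟩ := hS.exists_bound_of_continuousOn hg.continuousOn
    refine MemLp.of_bound hg.abs.aestronglyMeasurable C ?_
    exact (ae_restrict_mem hS.measurableSet).mono fun x hx => by simpa using hC x hx
  have hb : Tendsto (fun k => (∫ x in S, |w k x| ^ p) ^ (1 / p) *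
      (∫ x in S, |D x| ^ (p / (p - 1))) ^ (1 / (p / (p - 1)))) atTop (𝓝 0) := by
    have h1 := (h.rpow_const (p := 1 / p) (Or.inr (by positivity))).mul_const
      ((∫ x in S, |D x| ^ (p / (p - 1))) ^ (1 / (p / (p - 1))))
    rwa [Real.zero_rpow (by positivity), zero_mul] at h1
  refine squeeze_zero_norm (fun k => ?_) hb
  refine (norm_integral_le_integral_norm _).trans ?_
  have := integral_mul_le_Lp_mul_Lq_of_nonneg (μ := volume.restrict S) hpq
    (f := fun x => |w k x|) (g := fun x => |D x|) (Eventually.of_forall fun x => abs_nonneg _)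
    (Eventually.of_forall fun x => abs_nonneg _) (hmem _ (hw k)) (hmem _ hD)
  refine le_trans (le_of_eq ?_) this
  refine integral_congr_ae (Eventually.of_forall fun x => ?_)
  simp [mul_comm]

lemma tendsto_weak {d : ℕ} {S : Set (Euc d)} (hS : IsCompact S) {p : ℝ} (hp : 1 < p)
    {G : Euc d → Euc d} (hG : ContDiff ℝ 1 G) (hGS : tsupport G ⊆ S)
    {u : ℕ → Euc d → ℝ} {f : Euc d → ℝ} (hu : ∀ k, ContDiff ℝ 1 (u k)) (hf : ContDiff ℝ 1 f)
    (h : Tendsto (fun k => ∫ x in S, |u k x - f x| ^ p) atTop (𝓝 0)) :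
    Tendsto (fun k => ∫ x in S, ⟪G x, gradient (u k) x⟫) atTop
      (𝓝 (∫ x in S, ⟪G x, gradient f x⟫)) := by
  have hGc : HasCompactSupport G := hS.of_isClosed_subset (isClosed_tsupport _) hGS
  obtain ⟨D, hD, hD0, hDw⟩ := exists_div hG hGc
  have e1 : ∀ w : Euc d → ℝ, ContDiff ℝ 1 w →
      ∫ x in S, ⟪G x, gradient w x⟫ = ∫ x in S, D x * w x := fun w hw => by
    rw [setIntegral_eq_integral_of_forall_compl_eq_zero, hDw w hw,
      setIntegral_eq_integral_of_forall_compl_eq_zero]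
    · intro x hx
      rw [hD0 x fun hx' => hx (hGS hx'), zero_mul]
    · intro x hx
      rw [image_eq_zero_of_notMem_tsupport fun hx' => hx (hGS hx'), inner_zero_left]
  rw [e1 f hf]
  simp_rw [fun k => e1 (u k) (hu k)]
  have h2 := tendsto_integral_mul hS hp hD (w := fun k x => u k x - f x)
    (fun k => (hu k).continuous.sub hf.continuous) h
  have h3 : ∀ k, (∫ x in S, D x * u k x)
      = (∫ x in S, D x * (u k x - f x)) + ∫ x in S, D x * f x := by
    intro k
    rw [← integral_add]
    · congr 1; ext x; ring
    · exact (hD.mul ((hu k).continuous.sub hf.continuous)).continuousOn.integrableOn_compact hS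
    · exact (hD.mul hf.continuous).continuousOn.integrableOn_compact hS
  simp_rw [h3]
  simpa using h2.add_const (∫ x in S, D x * f x)

lemma step_ineq {d : ℕ} {Ω : Set (Euc d)} (hΩ : IsOpen Ω) {V : Euc d → ℝ} {p : ℝ}
    (hp : 1 < p) (hV : LocBddPotential Ω V)
    (hQ : ∀ u : Euc d → ℝ, IsTestFun Ω u → 0 ≤ energyQ Ω V p u)
    {η : Euc d → ℝ} (hη : IsTestFun Ω η) (hη0 : ∀ x, 0 ≤ η x) (hη1 : ∀ x, η x ≤ 1)
    {c : ℝ} (hc : 0 ≤ c) (hηg : ∀ x, ‖gradient η x‖ ≤ c * η x ^ ((p - 1) / p))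
    {f h : Euc d → ℝ} (hf : ContDiff ℝ 1 f) (hh : ContDiff ℝ 1 h) (hhc : HasCompactSupport h)
    (hhs : tsupport h ⊆ Ω) (hfh : ∀ x, gradient η x = 0 ∨ h x = f x)
    {u : Euc d → ℝ} (hu : IsTestFun Ω u) :
    ∫ x in tsupport η, η x * ‖gradient u x‖ ^ p ≤ energyQ Ω V p u +
      (∫ x in tsupport η, (1 : ℝ) * abs (η x ^ (1 / p) * ‖gradient h x‖ + c * |u x - f x|) ^ p) +
      (∫ x in tsupport η, V x * |(1 - η x) * u x + η x * h x| ^ p) -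
      ∫ x in tsupport η, V x * |u x| ^ p := by
  have hp0 : 0 < p := by linarith
  set S := tsupport η with hSdef
  have hS : IsCompact S := hη.2.1
  have hη' : ContDiff ℝ 1 η := hη.1.of_le (by simp)
  have hu' : ContDiff ℝ 1 u := hu.1.of_le (by simp)
  set w : Euc d → ℝ := fun x => (1 - η x) * u x + η x * h x with hwdef
  have hw : ContDiff ℝ 1 w := ((contDiff_const.sub hη').mul hu').add (hη'.mul hh)
  set T := (tsupport u ∪ tsupport h) ∪ S with hT
  have hTc : IsCompact T := (hu.2.1.isCompact.union hhc.isCompact).union hS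
  have hTΩ : T ⊆ Ω := Set.union_subset (Set.union_subset hu.2.2 hhs) hη.2.2
  have huT : tsupport u ⊆ T := fun x hx => Or.inl (Or.inl hx)
  have hST : S ⊆ T := fun x hx => Or.inr hx
  have hwT : tsupport w ⊆ T := by
    refine closure_minimal (fun x hx => ?_) hTc.isClosed
    by_contra hxT
    apply hx
    have h1 : u x = 0 := image_eq_zero_of_notMem_tsupport fun h => hxT (huT h)
    have h2 : h x = 0 := image_eq_zero_of_notMem_tsupport fun h => hxT (Or.inl (Or.inr h))
    simp [w, h1, h2]
  have hwQ : 0 ≤ energyQ Ω V p w := energyQ_nonneg_C1 hΩ hp0 hV hQ hw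
    (hTc.of_isClosed_subset (isClosed_tsupport _) hwT) (hwT.trans hTΩ)
  obtain ⟨M, hM⟩ := hV.2 T hTΩ hTc
  have cp : ∀ {h : Euc d → ℝ}, Continuous h → Continuous (fun x => |h x| ^ p) := fun hh =>
    hh.abs.rpow_const (fun _ => Or.inr hp0.le)
  have cn : ∀ {g : Euc d → ℝ}, ContDiff ℝ 1 g → Continuous (fun x => ‖gradient g x‖ ^ p) :=
    fun hg => (continuous_gradient hg).norm.rpow_const (fun _ => Or.inr hp0.le)
  have iT : ∀ {g : Euc d → ℝ}, ContDiff ℝ 1 g →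
      IntegrableOn (fun x => ‖gradient g x‖ ^ p + V x * |g x| ^ p) T := fun {g} hg =>
    Integrable.add ((cn hg).continuousOn.integrableOn_compact hTc)
      (integrableOn_weight hTc hV.1 hM (cp hg.continuous))
  have hdiff : energyQ Ω V p w - energyQ Ω V p u = ∫ x in S,
      ((‖gradient w x‖ ^ p + V x * |w x| ^ p) - (‖gradient u x‖ ^ p + V x * |u x| ^ p)) := by
    rw [energyQ_eq hΩ hp0 hTΩ hwT, energyQ_eq hΩ hp0 hTΩ huT, ← integral_sub (iT hw) (iT hu')]
    refine setIntegral_eq_of_subset_of_forall_sdiff_eq_zero hTc.measurableSet hST fun x hx => ?_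
    have hx' : x ∉ tsupport η := hx.2
    rw [notMem_tsupport_iff_eventuallyEq] at hx'
    have hwu : w =ᶠ[𝓝 x] u := hx'.mono fun y hy => by
      simp only [w]
      rw [hy]; simp
    rw [hwu.gradient_eq, hwu.eq_of_nhds, sub_self]
  have cg : Continuous (fun x => η x ^ (1 / p) * ‖gradient h x‖ + c * |u x - f x|) := by
    refine ((hη'.continuous.rpow_const fun _ => Or.inr (by positivity)).mul
      (continuous_gradient hh).norm).add
      (continuous_const.mul (hu'.continuous.sub hf.continuous).abs)
  have hMS : ∀ x ∈ S, |V x| ≤ M := fun x hx => hM x (hST hx)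
  have i1 : IntegrableOn (fun x => η x * ‖gradient u x‖ ^ p) S :=
    (hη'.continuous.mul (cn hu')).continuousOn.integrableOn_compact hS
  have i2 : IntegrableOn (fun x => (1 : ℝ) * abs (η x ^ (1 / p) * ‖gradient h x‖ + c * |u x - f x|) ^ p)
      S := (continuous_const.mul (cp cg)).continuousOn.integrableOn_compact hS
  have i3 : IntegrableOn (fun x => V x * |w x| ^ p) S :=
    integrableOn_weight hS hV.1 hMS (cp hw.continuous)
  have i4 : IntegrableOn (fun x => V x * |u x| ^ p) S :=
    integrableOn_weight hS hV.1 hMS (cp hu'.continuous)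
  have hle : (∫ x in S,
      ((‖gradient w x‖ ^ p + V x * |w x| ^ p) - (‖gradient u x‖ ^ p + V x * |u x| ^ p)))
      ≤ ∫ x in S, ((1 : ℝ) * abs (η x ^ (1 / p) * ‖gradient h x‖ + c * |u x - f x|) ^ p
        + V x * |w x| ^ p - V x * |u x| ^ p - η x * ‖gradient u x‖ ^ p) := by
    refine setIntegral_mono_on (((iT hw).sub (iT hu')).mono_set hST)
      (((i2.add i3).sub i4).sub i1) hS.measurableSet fun x hx => ?_
    have hgw : gradient w x = (1 - η x) • gradient u x + η x • gradient h x
        + (h x - u x) • gradient η x := gradient_interp x (hη'.differentiable one_ne_zero x)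
          (hu'.differentiable one_ne_zero x) (hh.differentiable one_ne_zero x)
    have hr : ‖(h x - u x) • gradient η x‖ ≤ (c * |u x - f x|) * η x ^ ((p - 1) / p) := by
      rcases hfh x with h0 | h0
      · rw [h0, smul_zero, norm_zero]
        have := Real.rpow_nonneg (hη0 x) ((p - 1) / p)
        positivity
      · rw [norm_smul, h0, Real.norm_eq_abs, abs_sub_comm]
        have := mul_le_mul_of_nonneg_left (hηg x) (abs_nonneg (u x - f x))
        linarith
    have hcv := conv_ineq hp (hη0 x) (hη1 x) (gradient u x) (gradient h x) _
      (by positivity) hr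
    rw [← hgw] at hcv
    have hnn : 0 ≤ η x ^ (1 / p) * ‖gradient h x‖ + c * |u x - f x| := by
      have := Real.rpow_nonneg (hη0 x) (1 / p)
      positivity
    rw [one_mul, abs_of_nonneg hnn]
    linarith
  have i23 : IntegrableOn (fun x => (1 : ℝ) *
      abs (η x ^ (1 / p) * ‖gradient h x‖ + c * |u x - f x|) ^ p + V x * |w x| ^ p) S := i2.add i3
  have i234 : IntegrableOn (fun x => (1 : ℝ) *
      abs (η x ^ (1 / p) * ‖gradient h x‖ + c * |u x - f x|) ^ p + V x * |w x| ^ p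
      - V x * |u x| ^ p) S := i23.sub i4
  rw [integral_sub i234 i1, integral_sub i23 i4, integral_add i2 i3] at hle
  linarith

lemma key_ineq {d : ℕ} {Ω : Set (Euc d)} (hΩ : IsOpen Ω) {V : Euc d → ℝ} {p : ℝ}
    (hp : 1 < p) (hV : LocBddPotential Ω V)
    (hQ : ∀ u : Euc d → ℝ, IsTestFun Ω u → 0 ≤ energyQ Ω V p u)
    {η : Euc d → ℝ} (hη : IsTestFun Ω η) (hη0 : ∀ x, 0 ≤ η x) (hη1 : ∀ x, η x ≤ 1)
    {c : ℝ} (hc : 0 ≤ c) (hηg : ∀ x, ‖gradient η x‖ ≤ c * η x ^ ((p - 1) / p))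
    {f h : Euc d → ℝ} (hf : ContDiff ℝ 1 f) (hfc : HasCompactSupport f)
    (hh : ContDiff ℝ 1 h) (hhc : HasCompactSupport h)
    (hhs : tsupport h ⊆ Ω) (hfh : ∀ x, gradient η x = 0 ∨ h x = f x)
    {u : ℕ → Euc d → ℝ} (hu : ∀ k, IsTestFun Ω (u k))
    (huQ : Tendsto (fun k => energyQ Ω V p (u k)) atTop (𝓝 0))
    (huf : Tendsto (fun k => ∫ x in tsupport η, |u k x - f x| ^ p) atTop (𝓝 0)) :
    (∫ x in tsupport η, η x * ‖gradient f x‖ ^ p) + (∫ x in tsupport η, V x * |f x| ^ p) ≤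
      (∫ x in tsupport η, η x * ‖gradient h x‖ ^ p) +
      ∫ x in tsupport η, V x * |(1 - η x) * f x + η x * h x| ^ p := by
  have hp0 : 0 < p := by linarith
  have hp1 : 0 < p - 1 := by linarith
  have hq0 : 0 ≤ p / (p - 1) := by positivity
  set S := tsupport η with hSdef
  have hS : IsCompact S := hη.2.1
  have hη' : ContDiff ℝ 1 η := hη.1.of_le (by simp)
  have hu' : ∀ k, ContDiff ℝ 1 (u k) := fun k => (hu k).1.of_le (by simp)
  obtain ⟨M, hM⟩ := hV.2 S hη.2.2 hS
  have chη : Continuous (fun x => η x ^ (1 / p) * ‖gradient h x‖) :=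
    (hη'.continuous.rpow_const fun _ => Or.inr (by positivity)).mul (continuous_gradient hh).norm
  -- limits of the right-hand side
  have l1 : Tendsto (fun k => ∫ x in S,
      (1 : ℝ) * abs (η x ^ (1 / p) * ‖gradient h x‖ + c * |u k x - f x|) ^ p) atTop
      (𝓝 (∫ x in S, (1 : ℝ) * |η x ^ (1 / p) * ‖gradient h x‖| ^ p)) := by
    refine tendsto_weighted hS (W := fun _ => (1 : ℝ)) measurable_const (M := 1) (by simp) hp0
      (g := fun k x => η x ^ (1 / p) * ‖gradient h x‖ + c * |u k x - f x|) (fun k => ?_) chη ?_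
    · exact chη.add (continuous_const.mul ((hu' k).continuous.sub hf.continuous).abs)
    · have : ∀ k, (∫ x in S, |η x ^ (1 / p) * ‖gradient h x‖ + c * |u k x - f x|
          - η x ^ (1 / p) * ‖gradient h x‖| ^ p) = c ^ p * ∫ x in S, |u k x - f x| ^ p := by
        intro k
        rw [← integral_const_mul]
        congr 1; ext x
        rw [add_sub_cancel_left, abs_mul, abs_abs, abs_of_nonneg hc,
          Real.mul_rpow hc (abs_nonneg _)]
      simp_rw [this]
      simpa using huf.const_mul (c ^ p)
  have e1 : (∫ x in S, (1 : ℝ) * |η x ^ (1 / p) * ‖gradient h x‖| ^ p)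
      = ∫ x in S, η x * ‖gradient h x‖ ^ p := by
    congr 1; ext x
    have h0 := Real.rpow_nonneg (hη0 x) (1 / p)
    rw [one_mul, abs_of_nonneg (by positivity), Real.mul_rpow h0 (norm_nonneg _),
      ← Real.rpow_mul (hη0 x), one_div, inv_mul_cancel₀ hp0.ne', Real.rpow_one]
  rw [e1] at l1
  have l2 : Tendsto (fun k => ∫ x in S, V x * |u k x| ^ p) atTop
      (𝓝 (∫ x in S, V x * |f x| ^ p)) :=
    tendsto_weighted hS hV.1 hM hp0 (fun k => (hu' k).continuous) hf.continuous huf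
  have l3 : Tendsto (fun k => ∫ x in S, V x * |(1 - η x) * u k x + η x * h x| ^ p) atTop
      (𝓝 (∫ x in S, V x * |(1 - η x) * f x + η x * h x| ^ p)) := by
    have hcw : ∀ {g : Euc d → ℝ}, Continuous g →
        Continuous (fun x => (1 - η x) * g x + η x * h x) := fun hg =>
      ((continuous_const.sub hη'.continuous).mul hg).add (hη'.continuous.mul hh.continuous)
    refine tendsto_weighted hS hV.1 hM hp0 (g := fun k x => (1 - η x) * u k x + η x * h x)
      (fun k => hcw (hu' k).continuous) (hcw hf.continuous) ?_
    refine squeeze_zero (fun k => integral_nonneg fun x => by positivity) (fun k => ?_) huf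
    refine setIntegral_mono_on ?_ ?_ hS.measurableSet fun x _ => ?_
    · exact ((((hcw (hu' k).continuous).sub (hcw hf.continuous)).abs.rpow_const
        (fun _ => Or.inr hp0.le))).continuousOn.integrableOn_compact hS
    · exact (((hu' k).continuous.sub hf.continuous).abs.rpow_const
        (fun _ => Or.inr hp0.le)).continuousOn.integrableOn_compact hS
    · refine Real.rpow_le_rpow (abs_nonneg _) ?_ hp0.le
      have : (1 - η x) * u k x + η x * h x - ((1 - η x) * f x + η x * h x)
          = (1 - η x) * (u k x - f x) := by ring
      rw [this, abs_mul, abs_of_nonneg (by linarith [hη1 x])]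
      have := abs_nonneg (u k x - f x)
      nlinarith [hη0 x]
  set R := (∫ x in S, η x * ‖gradient h x‖ ^ p) +
    (∫ x in S, V x * |(1 - η x) * f x + η x * h x| ^ p) - ∫ x in S, V x * |f x| ^ p with hR
  have lR := ((huQ.add l1).add l3).sub l2
  rw [zero_add] at lR
  -- lower bound through smooth fields
  have hF : ∀ F : Euc d → Euc d, ContDiff ℝ 1 F →
      ∫ x in S, η x * (p * ⟪F x, gradient f x⟫ - (p - 1) * ‖F x‖ ^ (p / (p - 1))) ≤ R := by
    intro F hF
    have hGS : tsupport (fun x => η x • F x) ⊆ S := closure_mono (fun x hx => by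
      intro h0; apply hx; simp [h0])
    have lw := tendsto_weak hS hp (G := fun x => η x • F x) (hη'.smul hF) hGS hu' hf huf
    have cF : Continuous (fun x => η x * ((p - 1) * ‖F x‖ ^ (p / (p - 1)))) :=
      hη'.continuous.mul (continuous_const.mul
        (hF.continuous.norm.rpow_const fun _ => Or.inr hq0))
    have split : ∀ g : Euc d → ℝ, ContDiff ℝ 1 g →
        ∫ x in S, η x * (p * ⟪F x, gradient g x⟫ - (p - 1) * ‖F x‖ ^ (p / (p - 1)))
        = p * (∫ x in S, ⟪η x • F x, gradient g x⟫)
          - ∫ x in S, η x * ((p - 1) * ‖F x‖ ^ (p / (p - 1))) := by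
      intro g hg
      have cI : Continuous (fun x => ⟪η x • F x, gradient g x⟫) :=
        (hη'.continuous.smul hF.continuous).inner (continuous_gradient hg)
      rw [← integral_const_mul, ← integral_sub]
      · congr 1; ext x
        rw [real_inner_smul_left]; ring
      · exact (continuous_const.mul cI).continuousOn.integrableOn_compact hS
      · exact cF.continuousOn.integrableOn_compact hS
    have lL : Tendsto (fun k => ∫ x in S, η x * (p * ⟪F x, gradient (u k) x⟫
        - (p - 1) * ‖F x‖ ^ (p / (p - 1)))) atTop
        (𝓝 (∫ x in S, η x * (p * ⟪F x, gradient f x⟫ - (p - 1) * ‖F x‖ ^ (p / (p - 1))))) := by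
      rw [split f hf]
      simp_rw [fun k => split (u k) (hu' k)]
      exact (lw.const_mul p).sub_const _
    refine le_of_tendsto_of_tendsto' lL lR fun k => ?_
    refine le_trans ?_ (step_ineq hΩ hp hV hQ hη hη0 hη1 hc hηg hf hh hhc hhs hfh (hu k))
    refine setIntegral_mono_on ?_ ?_ hS.measurableSet fun x _ => ?_
    · exact (hη'.continuous.mul ((continuous_const.mul
        (hF.continuous.inner (continuous_gradient (hu' k)))).sub (continuous_const.mul
        (hF.continuous.norm.rpow_const fun _ => Or.inr hq0)))).continuousOn.integrableOn_compact hS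
    · exact (hη'.continuous.mul ((continuous_gradient (hu' k)).norm.rpow_const
        fun _ => Or.inr hp0.le)).continuousOn.integrableOn_compact hS
    · exact mul_le_mul_of_nonneg_left (young_dual hp _ _) (hη0 x)
  -- approximate the dual field of the gradient
  set H : Euc d → Euc d := fun x => dualMap p (gradient f x) with hH
  have cgf := continuous_gradient hf
  have cH : Continuous H := (continuous_dualMap hp).comp cgf
  have hHc : HasCompactSupport H := by
    refine hfc.isCompact.of_isClosed_subset (isClosed_tsupport _) ?_
    refine closure_minimal (fun x hx => ?_) (isClosed_tsupport _)
    by_contra hxf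
    apply hx
    simp [H, gradient_eq_zero_of_notMem hxf, dualMap]
  have uH : UniformContinuous H := cH.uniformContinuous_of_tendsto_cocompact hHc.is_zero_at_infty
  obtain ⟨B, hB⟩ := hHc.exists_bound_of_continuous cH
  have hex : ∀ j : ℕ, ∃ F : Euc d → Euc d, ContDiff ℝ 1 F ∧
      ∀ x, dist (F x) (H x) < 1 / ((j : ℝ) + 1) := fun j => by
    obtain ⟨F, hF1, hF2⟩ := uH.exists_contDiff_dist_le (ε := 1 / ((j : ℝ) + 1)) (by positivity)
    exact ⟨F, hF1.of_le (by simp), hF2⟩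
  choose F hF1 hF2 using hex
  have hFlim : ∀ x, Tendsto (fun j => F j x) atTop (𝓝 (H x)) := fun x => by
    rw [tendsto_iff_dist_tendsto_zero]
    exact squeeze_zero (fun j => dist_nonneg) (fun j => (hF2 j x).le)
      tendsto_one_div_add_atTop_nhds_zero_nat
  have hFb : ∀ j x, ‖F j x‖ ≤ B + 1 := fun j x => by
    have h1 : ‖F j x‖ ≤ dist (F j x) (H x) + ‖H x‖ := by
      rw [dist_eq_norm]; simpa using norm_add_le (F j x - H x) (H x)
    have h2 : 1 / ((j : ℝ) + 1) ≤ 1 := by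
      rw [div_le_one (by positivity)]
      have : (0 : ℝ) ≤ j := by positivity
      linarith
    linarith [hB x, hF2 j x]
  have lF : Tendsto (fun j => ∫ x in S, η x * (p * ⟪F j x, gradient f x⟫
      - (p - 1) * ‖F j x‖ ^ (p / (p - 1)))) atTop (𝓝 (∫ x in S, η x * ‖gradient f x‖ ^ p)) := by
    refine tendsto_integral_of_dominated_convergence
      (fun x => p * ((B + 1) * ‖gradient f x‖) + (p - 1) * (B + 1) ^ (p / (p - 1)))
      (fun j => ?_) ?_ (fun j => ?_) ?_
    · exact (hη'.continuous.mul ((continuous_const.mul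
        ((hF1 j).continuous.inner cgf)).sub (continuous_const.mul
        ((hF1 j).continuous.norm.rpow_const fun _ => Or.inr hq0)))).aestronglyMeasurable
    · exact ((continuous_const.mul (continuous_const.mul cgf.norm)).add
        continuous_const).continuousOn.integrableOn_compact hS
    · refine Eventually.of_forall fun x => ?_
      have a1 : |⟪F j x, gradient f x⟫| ≤ (B + 1) * ‖gradient f x‖ :=
        (abs_real_inner_le_norm _ _).trans
          (mul_le_mul_of_nonneg_right (hFb j x) (norm_nonneg _))
      have a2 : ‖F j x‖ ^ (p / (p - 1)) ≤ (B + 1) ^ (p / (p - 1)) :=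
        Real.rpow_le_rpow (norm_nonneg _) (hFb j x) hq0
      have a3 : 0 ≤ ‖F j x‖ ^ (p / (p - 1)) := by positivity
      rw [norm_mul, Real.norm_of_nonneg (hη0 x)]
      refine (mul_le_of_le_one_left (norm_nonneg _) (hη1 x)).trans ?_
      refine (norm_sub_le _ _).trans (add_le_add ?_ ?_)
      · rw [norm_mul, Real.norm_of_nonneg hp0.le, Real.norm_eq_abs]
        exact mul_le_mul_of_nonneg_left a1 hp0.le
      · rw [norm_mul, Real.norm_of_nonneg hp1.le, Real.norm_of_nonneg a3]
        exact mul_le_mul_of_nonneg_left a2 hp1.le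
    · refine Eventually.of_forall fun x => ?_
      rw [← young_eq hp (gradient f x)]
      exact ((((hFlim x).inner tendsto_const_nhds).const_mul p).sub
        (((hFlim x).norm.rpow_const (Or.inr hq0)).const_mul (p - 1))).const_mul (η x)
  have := le_of_tendsto' lF fun j => hF (F j) (hF1 j)
  rw [hR] at this
  linarith

lemma hasDerivAt_dual {E : Type*} [NormedAddCommGroup E] [InnerProductSpace ℝ E] {p : ℝ}
    (hp : 1 < p) (a b : E) (t : ℝ) :
    HasDerivAt (fun s : ℝ => ‖a + s • b‖ ^ p) (p * ⟪dualMap p (a + t • b), b⟫) t := by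
  have h1 : HasDerivAt (fun s : ℝ => a + s • b) b t := by
    simpa using ((hasDerivAt_id t).smul_const b).const_add a
  have h2 := (hasFDerivAt_norm_rpow (a + t • b) hp).comp_hasDerivAt t h1
  refine h2.congr_deriv ?_
  simp only [dualMap, real_inner_smul_left, ContinuousLinearMap.smul_apply, innerSL_apply_apply,
    smul_eq_mul]
  ring

lemma hasDerivAt_J {d : ℕ} {S : Set (Euc d)} (hS : IsCompact S) {V : Euc d → ℝ}
    (hV : Measurable V) {M : ℝ} (hM : ∀ x ∈ S, |V x| ≤ M) {p : ℝ} (hp : 1 < p)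
    {η f φ : Euc d → ℝ} {a b : Euc d → Euc d} (hη : Continuous η) (hf : Continuous f)
    (hφ : Continuous φ) (ha : Continuous a) (hb : Continuous b) :
    HasDerivAt (fun t : ℝ => ∫ x in S, (η x * ‖a x + t • b x‖ ^ p + V x * ‖f x + t • φ x‖ ^ p))
      (∫ x in S, (η x * (p * ⟪dualMap p (a x), b x⟫) + V x * (p * ⟪dualMap p (f x), φ x⟫))) 0 := by
  have hp0 : 0 ≤ p := by linarith
  have c1 : Continuous (fun z : ℝ × Euc d =>
      η z.2 * (p * ⟪dualMap p (a z.2 + z.1 • b z.2), b z.2⟫)) := by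
    have := continuous_dualMap (E := Euc d) hp
    fun_prop
  have c2 : Continuous (fun z : ℝ × Euc d =>
      p * ⟪dualMap p (f z.2 + z.1 • φ z.2), φ z.2⟫) := by
    have := continuous_dualMap (E := ℝ) hp
    fun_prop
  have hK : IsCompact (Metric.closedBall (0 : ℝ) 1 ×ˢ S) := (isCompact_closedBall _ _).prod hS
  obtain ⟨C1, hC1⟩ := hK.exists_bound_of_continuousOn c1.continuousOn
  obtain ⟨C2, hC2⟩ := hK.exists_bound_of_continuousOn c2.continuousOn
  have iF : ∀ t : ℝ, IntegrableOn
      (fun x => η x * ‖a x + t • b x‖ ^ p + V x * ‖f x + t • φ x‖ ^ p) S := fun t =>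
    Integrable.add
      ((hη.mul ((ha.add (hb.const_smul t)).norm.rpow_const
        fun _ => Or.inr hp0)).continuousOn.integrableOn_compact hS)
      (integrableOn_weight hS hV hM ((hf.add (hφ.const_smul t)).norm.rpow_const
        fun _ => Or.inr hp0))
  have iF' : IntegrableOn (fun x => η x * (p * ⟪dualMap p (a x + (0 : ℝ) • b x), b x⟫)
      + V x * (p * ⟪dualMap p (f x + (0 : ℝ) • φ x), φ x⟫)) S :=
    Integrable.add
      ((c1.comp (Continuous.prodMk_right (0 : ℝ))).continuousOn.integrableOn_compact hS)
      (integrableOn_weight hS hV hM (c2.comp (Continuous.prodMk_right (0 : ℝ))))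
  have key := (hasDerivAt_integral_of_dominated_loc_of_deriv_le (μ := volume.restrict S)
    (F := fun (t : ℝ) x => η x * ‖a x + t • b x‖ ^ p + V x * ‖f x + t • φ x‖ ^ p)
    (F' := fun t x => η x * (p * ⟪dualMap p (a x + t • b x), b x⟫)
      + V x * (p * ⟪dualMap p (f x + t • φ x), φ x⟫)) (x₀ := 0)
    (bound := fun _ => C1 + M * C2)
    (Metric.closedBall_mem_nhds (0 : ℝ) one_pos)
    (Eventually.of_forall fun t => (iF t).aestronglyMeasurable) (iF 0)
    iF'.aestronglyMeasurable
    ((ae_restrict_mem hS.measurableSet).mono fun x hx t ht => ?_)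
    (continuousOn_const.integrableOn_compact hS)
    (Eventually.of_forall fun x t _ => ?_)).2
  · simpa using key
  · refine (norm_add_le _ _).trans (add_le_add (hC1 (t, x) ⟨ht, hx⟩) ?_)
    rw [norm_mul]
    exact mul_le_mul (hM x hx) (hC2 (t, x) ⟨ht, hx⟩) (norm_nonneg _)
      ((abs_nonneg _).trans (hM x hx))
  · exact ((hasDerivAt_dual hp (a x) (b x) t).const_mul _).add
      ((hasDerivAt_dual hp (f x) (φ x) t).const_mul _)

lemma exists_eta {d : ℕ} {K Ω : Set (Euc d)} (hK : IsCompact K) (hΩ : IsOpen Ω) (hKΩ : K ⊆ Ω)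
    {p : ℝ} (hp : 1 < p) :
    ∃ η : Euc d → ℝ, IsTestFun Ω η ∧ (∀ x, 0 ≤ η x) ∧ (∀ x, η x ≤ 1) ∧
      (∀ x ∈ K, η =ᶠ[𝓝 x] fun _ => 1) ∧
      ∃ c : ℝ, 0 ≤ c ∧ ∀ x, ‖gradient η x‖ ≤ c * η x ^ ((p - 1) / p) := by
  obtain ⟨ζ, hζ, h0, h1, hone⟩ := exists_cutoff hK hΩ hKΩ
  set m := ⌈p⌉₊ with hm
  have hmp : p ≤ m := Nat.le_ceil p
  have hm0 : m ≠ 0 := by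
    intro h; rw [h] at hmp; norm_num at hmp; linarith
  have hζ' : ContDiff ℝ 1 ζ := hζ.1.of_le (by simp)
  have hsub : tsupport (fun x => ζ x ^ m) ⊆ tsupport ζ :=
    closure_mono fun x hx h => hx (by simp [h, hm0])
  have hgc : HasCompactSupport (gradient ζ) := by
    refine hζ.2.1.isCompact.of_isClosed_subset (isClosed_tsupport _) ?_
    refine closure_minimal (fun x hx => ?_) (isClosed_tsupport _)
    by_contra hxf
    exact hx (gradient_eq_zero_of_notMem hxf)
  obtain ⟨B, hB⟩ := hgc.exists_bound_of_continuous (continuous_gradient hζ')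
  have hB0 : 0 ≤ B := (norm_nonneg _).trans (hB 0)
  refine ⟨fun x => ζ x ^ m, ⟨hζ.1.pow m, hζ.2.1.isCompact.of_isClosed_subset
    (isClosed_tsupport _) hsub, hsub.trans hζ.2.2⟩, fun x => pow_nonneg (h0 x) m,
    fun x => pow_le_one₀ (h0 x) (h1 x), fun x hx => ?_, m * B, by positivity, fun x => ?_⟩
  · have h2 : ∀ᶠ y in 𝓝 x, ζ y = 1 := (nhds_le_nhdsSet hx) hone
    exact h2.mono fun y hy => by simp [hy]
  · have hd := (hζ'.differentiable one_ne_zero x).hasFDerivAt.pow m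
    have hg : gradient (fun x => ζ x ^ m) x = (m * ζ x ^ (m - 1)) • gradient ζ x := by
      rw [gradient_def', gradient_def', hd.fderiv, map_smul]
      simp
    rw [hg, norm_smul, Real.norm_of_nonneg (by have := h0 x; positivity)]
    have h3 : ζ x ^ (m - 1) ≤ (ζ x ^ m) ^ ((p - 1) / p) := by
      rw [← Real.rpow_natCast, ← Real.rpow_natCast, ← Real.rpow_mul (h0 x)]
      have hcast : ((m - 1 : ℕ) : ℝ) = m - 1 := by
        rw [Nat.cast_sub (Nat.one_le_iff_ne_zero.2 hm0)]; simp
      rw [hcast]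
      refine Real.rpow_le_rpow_of_exponent_ge' (h0 x) (h1 x) ?_ ?_
      · have : 0 ≤ p - 1 := by linarith
        positivity
      · rw [← mul_div_assoc, div_le_iff₀ (by linarith)]
        nlinarith
    have h4 := mul_le_mul h3 (hB x) (norm_nonneg _) (Real.rpow_nonneg (pow_nonneg (h0 x) m) _)
    have h5 := mul_le_mul_of_nonneg_left h4 (Nat.cast_nonneg (α := ℝ) m)
    linarith

lemma exists_C1_ext {d : ℕ} {S Ω : Set (Euc d)} (hS : IsCompact S) (hΩ : IsOpen Ω) (hSΩ : S ⊆ Ω)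
    {v : Euc d → ℝ} (hv : ContDiffOn ℝ 1 v Ω) :
    ∃ f : Euc d → ℝ, ContDiff ℝ 1 f ∧ HasCompactSupport f ∧ tsupport f ⊆ Ω ∧
      ∀ x ∈ S, f =ᶠ[𝓝 x] v := by
  obtain ⟨χ, hχ, h0, h1, hone⟩ := exists_cutoff hS hΩ hSΩ
  have hχ' : ContDiff ℝ 1 χ := hχ.1.of_le (by simp)
  have hsub : tsupport (fun x => χ x * v x) ⊆ tsupport χ :=
    closure_mono fun x hx h => hx (by simp [h])
  refine ⟨fun x => χ x * v x, ?_, hχ.2.1.isCompact.of_isClosed_subset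
    (isClosed_tsupport _) hsub, hsub.trans hχ.2.2, fun x hx => ?_⟩
  · rw [contDiff_iff_contDiffAt]
    intro x
    by_cases hx : x ∈ tsupport χ
    · exact hχ'.contDiffAt.mul (hv.contDiffAt (hΩ.mem_nhds (hχ.2.2 hx)))
    · have h2 := notMem_tsupport_iff_eventuallyEq.1 fun h => hx (hsub h)
      exact (contDiffAt_const (c := (0 : ℝ))).congr_of_eventuallyEq h2
  · have h2 : ∀ᶠ y in 𝓝 x, χ y = 1 := (nhds_le_nhdsSet hx) hone
    exact h2.mono fun y hy => by simp [hy]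

/-- A ground state of `Q` is a positive solution of the equation `Q'(u) = 0` in `Ω`. -/
theorem groundState_isPositiveSolution {d : ℕ} (hd : 2 ≤ d)
    (Ω : Set (Euc d)) (hΩo : IsOpen Ω) (hΩc : IsConnected Ω)
    {p : ℝ} (hp₁ : 1 < p) (V : Euc d → ℝ) (hV : LocBddPotential Ω V)
    (hQ : ∀ u : Euc d → ℝ, IsTestFun Ω u → 0 ≤ energyQ Ω V p u)
    (v : Euc d → ℝ) (hv : IsGroundState Ω V p v) :
    IsPositiveSolution Ω V p v := by
  obtain ⟨hvC, hvpos, u, ⟨hu, -, B, -, -, -, -, huQ⟩, huv⟩ := hv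
  refine ⟨hvC, hvpos, fun φ hφ => ?_⟩
  have hp0 : 0 < p := by linarith
  have hφ' : ContDiff ℝ 1 φ := hφ.1.of_le (by simp)
  obtain ⟨η, hη, hη0, hη1, hηK, c, hc, hηg⟩ :=
    exists_eta (K := tsupport φ) hφ.2.1 hΩo hφ.2.2 hp₁
  obtain ⟨f, hf, hfc, hfs, hfv⟩ := exists_C1_ext (S := tsupport η) hη.2.1 hΩo hη.2.2 hvC
  have hS : IsCompact (tsupport η) := hη.2.1
  obtain ⟨M, hM⟩ := hV.2 _ hη.2.2 hS
  have hKS : tsupport φ ⊆ tsupport η := fun x hx => subset_tsupport _ (by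
    have := (hηK x hx).eq_of_nhds
    simp [this])
  have huf : Tendsto (fun k => ∫ x in tsupport η, |u k x - f x| ^ p) atTop (𝓝 0) := by
    refine (huv _ hη.2.2 hS).congr fun k => ?_
    refine setIntegral_congr_fun hS.measurableSet fun x hx => ?_
    simp only [(hfv x hx).eq_of_nhds]
  have hder := hasDerivAt_J hS hV.1 hM hp₁ (η := η) (f := f) (φ := φ) (a := gradient f)
    (b := gradient φ) hη.1.continuous hf.continuous hφ'.continuous
    (continuous_gradient hf) (continuous_gradient hφ')
  have hη' : Continuous η := hη.1.continuous
  have i1 : ∀ t : ℝ, IntegrableOn (fun x => η x * ‖gradient f x + t • gradient φ x‖ ^ p)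
      (tsupport η) := fun t =>
    (hη'.mul (((continuous_gradient hf).add ((continuous_gradient hφ').const_smul t)).norm.rpow_const
        fun _ => Or.inr hp0.le)).continuousOn.integrableOn_compact hS
  have i2 : ∀ t : ℝ, IntegrableOn (fun x => V x * ‖f x + t • φ x‖ ^ p) (tsupport η) := fun t =>
    integrableOn_weight hS hV.1 hM ((hf.continuous.add (hφ'.continuous.const_smul t)).norm.rpow_const
        fun _ => Or.inr hp0.le)
  have hmin : ∀ t : ℝ,
      (∫ x in tsupport η, (η x * ‖gradient f x + (0 : ℝ) • gradient φ x‖ ^ p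
        + V x * ‖f x + (0 : ℝ) • φ x‖ ^ p)) ≤
      ∫ x in tsupport η, (η x * ‖gradient f x + t • gradient φ x‖ ^ p
        + V x * ‖f x + t • φ x‖ ^ p) := by
    intro t
    rw [integral_add (i1 0) (i2 0), integral_add (i1 t) (i2 t)]
    have hh : ContDiff ℝ 1 (fun y => f y + t * φ y) := hf.add (contDiff_const.mul hφ')
    have hsub : tsupport (fun y => f y + t * φ y) ⊆ tsupport f ∪ tsupport φ := by
      refine closure_minimal (fun x hx => ?_) ((isClosed_tsupport _).union (isClosed_tsupport _))
      by_contra hxT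
      apply hx
      have h1 : f x = 0 := image_eq_zero_of_notMem_tsupport fun h => hxT (Or.inl h)
      have h2 : φ x = 0 := image_eq_zero_of_notMem_tsupport fun h => hxT (Or.inr h)
      simp [h1, h2]
    have key := key_ineq hΩo hp₁ hV hQ hη hη0 hη1 hc hηg hf hfc hh
      ((hfc.isCompact.union hφ.2.1.isCompact).of_isClosed_subset (isClosed_tsupport _) hsub)
      (hsub.trans (Set.union_subset hfs hφ.2.2)) (fun x => ?_) hu huQ huf
    · have e1 : ∀ x, gradient (fun y => f y + t * φ y) x = gradient f x + t • gradient φ x :=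
        fun x => gradient_add_smul t x (hf.differentiable one_ne_zero x)
          (hφ'.differentiable one_ne_zero x)
      have e2 : ∀ x, (1 - η x) * f x + η x * (f x + t * φ x) = f x + t * φ x := fun x => by
        by_cases hx : x ∈ tsupport φ
        · rw [(hηK x hx).eq_of_nhds]; ring
        · rw [image_eq_zero_of_notMem_tsupport hx]; ring
      simp only [e1, e2] at key
      simpa using key
    · by_cases hx : x ∈ tsupport φ
      · left
        rw [(hηK x hx).gradient_eq]
        exact gradient_fun_const x 1
      · right
        simp [image_eq_zero_of_notMem_tsupport hx]
  have hz := IsLocalMin.hasDerivAt_eq_zero (Eventually.of_forall hmin) hder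
  have heq : (∫ x in tsupport η, (η x * (p * ⟪dualMap p (gradient f x), gradient φ x⟫)
      + V x * (p * ⟪dualMap p (f x), φ x⟫))) = p * ∫ x in Ω,
      (‖gradient v x‖ ^ (p - 2) * ⟪gradient v x, gradient φ x⟫ + V x * v x ^ (p - 1) * φ x) := by
    rw [setIntegral_eq_of_subset_of_forall_sdiff_eq_zero hΩo.measurableSet hη.2.2,
      ← integral_const_mul]
    · refine setIntegral_congr_fun hS.measurableSet fun x hx => ?_
      by_cases hxφ : x ∈ tsupport φ
      · have hvx := hvpos x (hφ.2.2 hxφ)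
        have h1 : v x ^ (p - 1) = v x ^ (p - 2) * v x := by
          rw [← Real.rpow_add_one hvx.ne']; ring_nf
        simp only [dualMap, real_inner_smul_left]
        rw [(hηK x hxφ).eq_of_nhds, (hfv x hx).gradient_eq, (hfv x hx).eq_of_nhds, h1,
          Real.norm_of_nonneg hvx.le]
        simp
        ring
      · simp [image_eq_zero_of_notMem_tsupport hxφ, gradient_eq_zero_of_notMem hxφ]
    · intro x hx
      have hxφ : x ∉ tsupport φ := fun h => hx.2 (hKS h)
      simp [image_eq_zero_of_notMem_tsupport hxφ, gradient_eq_zero_of_notMem hxφ]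
  rw [heq] at hz
  exact (mul_eq_zero.1 hz).resolve_left hp0.ne'
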